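/- Let X and Y be topological spaces carrying continuous actions of the topological group ℂ* = ℂ∖{0}, with Y Hausdorff, X having only finitely many fixed points, and the action on X filtrable (every point of X converges as η → 0 to some fixed point). Let π : X → Y be a continuous, surjective, ℂ*-equivariant, closed map. If y and y' are fixed points of Y with cl(Y_y) ∩ Y_{y'} ≠ ∅, then there exist fixed points x and x' of X with π(x) = y, π(x') = y', and cl(X_x) ∩ X_{x'} ≠ ∅, where cl denotes topological closure. -/

import Mathlib

open Filter Topology

/-- The filter of punctured neighbourhoods of `0` in `ℂ`, restricted to `ℂ*`. -/
noncomputable def zeroFilter : Filter ℂˣ := Filter.comap (Units.val) (𝓝[≠] (0 : ℂ))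

/-- A point is fixed if it is fixed by every `η ∈ ℂ*`. -/
def IsCFixed {X : Type*} [MulAction ℂˣ X] (x : X) : Prop := ∀ η : ℂˣ, η • x = x

/-- The attracting set of a point `x₀` : the points converging to `x₀` as `η → 0`. -/
noncomputable def attractSet (X : Type*) [TopologicalSpace X] [MulAction ℂˣ X] (x₀ : X) :
    Set X :=
  {x | Filter.Tendsto (fun η : ℂˣ => η • x) zeroFilter (𝓝 x₀)}

/-!
Since `Y` is Hausdorff, limits of orbits are unique, so every point of `X` lying over `Y_y`
converges to a fixed point over `y`. Hence `Y_y` is the image of the union, over the fixed points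
`x` above `y`, of the `X_x`. This union is finite and `π` is closed, so taking closures commutes
with both the union and the image: `cl(Y_y)` is the union of the `π(cl(X_x))`. A point of
`cl(Y_y) ∩ Y_{y'}` therefore lifts to some `w` in some `cl(X_x)`, and `x'` is the limit of `w`.
-/

instance zeroFilter_neBot : zeroFilter.NeBot :=
  NeBot.comap_of_range_mem inferInstance <|
    mem_of_superset self_mem_nhdsWithin fun a ha => ⟨Units.mk0 a ha, rfl⟩

/-- The basin of `x₀` along a filter `l` on the acting type: the points `x` such that `m • x`
tends to `x₀` as `m` tends to `l`. For `l = zeroFilter` this is definitionally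
`attractSet X x₀`. -/
def basin {M X : Type*} [SMul M X] [TopologicalSpace X] (l : Filter M) (x₀ : X) : Set X :=
  {x | Tendsto (fun m : M => m • x) l (𝓝 x₀)}

section Basin

variable {M X Y : Type*} [SMul M X] [SMul M Y] [TopologicalSpace X] [TopologicalSpace Y]
  {l : Filter M} {S : Set X} {f : X →[M] Y} {y y' : Y}

theorem eq_of_mem_basin [T2Space X] [l.NeBot] {x a b : X}
    (ha : x ∈ basin l a) (hb : x ∈ basin l b) : a = b :=
  tendsto_nhds_unique ha hb

theorem mapsTo_basin {x₀ : X} (hf : ContinuousAt f x₀) :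
    Set.MapsTo f (basin l x₀) (basin l (f x₀)) := fun x hx =>
  (hf.tendsto.comp hx).congr fun m => map_smul f m x

theorem basin_eq_image_biUnion [T2Space Y] [l.NeBot] (hf : Continuous f)
    (hsurj : Function.Surjective f) (hS : ∀ x, ∃ x₀ ∈ S, x ∈ basin l x₀) :
    basin l y = f '' ⋃ x ∈ S ∩ f ⁻¹' {y}, basin l x := by
  apply Set.Subset.antisymm
  · intro v hv
    obtain ⟨w, rfl⟩ := hsurj v
    obtain ⟨x, hxS, hw⟩ := hS w
    have hxy : f x = y := eq_of_mem_basin (mapsTo_basin hf.continuousAt hw) hv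
    exact ⟨w, Set.mem_biUnion ⟨hxS, hxy⟩ hw, rfl⟩
  · refine Set.image_subset_iff.2 (Set.iUnion₂_subset ?_)
    rintro x ⟨-, rfl⟩
    exact mapsTo_basin hf.continuousAt

theorem closure_basin_eq_image_biUnion [T2Space Y] [l.NeBot] (hf : Continuous f)
    (hsurj : Function.Surjective f) (hclosed : IsClosedMap f)
    (hS : ∀ x, ∃ x₀ ∈ S, x ∈ basin l x₀) (hfin : (S ∩ f ⁻¹' {y}).Finite) :
    closure (basin l y) = f '' ⋃ x ∈ S ∩ f ⁻¹' {y}, closure (basin l x) := by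
  rw [basin_eq_image_biUnion hf hsurj hS, hclosed.closure_image_eq_of_continuous hf,
    hfin.closure_biUnion]

theorem statement7_general [T2Space Y] [l.NeBot] (hf : Continuous f)
    (hsurj : Function.Surjective f) (hclosed : IsClosedMap f)
    (hS : ∀ x, ∃ x₀ ∈ S, x ∈ basin l x₀) (hfin : (S ∩ f ⁻¹' {y}).Finite)
    (h : (closure (basin l y) ∩ basin l y').Nonempty) :
    ∃ x ∈ S, ∃ x' ∈ S, f x = y ∧ f x' = y' ∧ (closure (basin l x) ∩ basin l x').Nonempty := by
  obtain ⟨z, hz, hz'⟩ := h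
  rw [closure_basin_eq_image_biUnion hf hsurj hclosed hS hfin] at hz
  obtain ⟨w, hw, rfl⟩ := hz
  obtain ⟨x, ⟨hxS, hxy⟩, hwx⟩ := Set.mem_iUnion₂.1 hw
  obtain ⟨x', hx'S, hwx'⟩ := hS w
  have hx'y' : f x' = y' := eq_of_mem_basin (mapsTo_basin hf.continuousAt hwx') hz'
  exact ⟨x, hxS, x', hx'S, hxy, hx'y', w, hwx, hwx'⟩

end Basin

/-- If `π : X → Y` is a continuous, surjective, closed, `ℂ*`-equivariant map, `Y`
Hausdorff, `X` with finitely many fixed points and a filtrable action, then any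
one-step relation `cl(Y_y) ∩ Y_{y'} ≠ ∅` between fixed points of `Y` lifts to a
one-step relation between fixed points of `X` lying over `y` and `y'`. -/
theorem statement7 {X Y : Type*} [TopologicalSpace X] [TopologicalSpace Y] [T2Space Y]
    [MulAction ℂˣ X] [ContinuousSMul ℂˣ X] [MulAction ℂˣ Y] [ContinuousSMul ℂˣ Y]
    (hXfin : {x : X | IsCFixed x}.Finite)
    (hfiltr : ∀ x : X, ∃ x₀ : X, IsCFixed x₀ ∧ x ∈ attractSet X x₀)
    (π : X → Y) (hcont : Continuous π) (hsurj : Function.Surjective π)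
    (hclosed : IsClosedMap π)
    (hequiv : ∀ (η : ℂˣ) (x : X), π (η • x) = η • π x)
    (y y' : Y) (hy : IsCFixed y) (hy' : IsCFixed y')
    (h : (closure (attractSet Y y) ∩ attractSet Y y').Nonempty) :
    ∃ x x' : X, IsCFixed x ∧ IsCFixed x' ∧ π x = y ∧ π x' = y' ∧
      (closure (attractSet X x) ∩ attractSet X x').Nonempty := by
  obtain ⟨x, hx, x', hx', hlift⟩ := statement7_general (f := (⟨π, hequiv⟩ : X →[ℂˣ] Y))
    hcont hsurj hclosed hfiltr (hXfin.inter_of_left _) h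
  exact ⟨x, x', hx, hx', hlift⟩
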